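/- arXiv:2201.05465 — 2 statements merged into one kernel-verified Lean document; each statement's English description precedes it below -/
import Mathlib

section
/- Suppose 1/3 < α ≤ 1, let c ≥ 1 be an integer and let G be c-closed. Let S ⊆ V with |S| = k, let v ∈ S, and let X ⊆ N(v)∖S be a set of vertices with degc(x) ≥ degc(v) for every x ∈ X and |X| > (c−1)·k. Then there exists a vertex v' ∈ X such that val((S∖{v}) ∪ {v'}) ≥ val(S). -/
open Finset

variable {V : Type*} [Fintype V] [DecidableEq V]

/-- Number of edges of `G` with both endpoints in `S`. -/
def mIn (G : SimpleGraph V) [DecidableRel G.Adj] (S : Finset V) : ℕ :=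
  (G.edgeFinset.filter (fun e => ∀ v ∈ e, v ∈ S)).card

/-- Number of edges of `G` with exactly one endpoint in `S`. -/
def mCut (G : SimpleGraph V) [DecidableRel G.Adj] (S : Finset V) : ℕ :=
  (G.edgeFinset.filter (fun e => (∃ v ∈ e, v ∈ S) ∧ ∃ v ∈ e, v ∉ S)).card

/-- `val(S) = α·(m(S, V∖S) + counter(S)) + (1−α)·m(S)`. -/
noncomputable def val (G : SimpleGraph V) [DecidableRel G.Adj] (counter : V → ℕ) (α : ℝ)
    (S : Finset V) : ℝ :=
  α * ((mCut G S : ℝ) + ∑ v ∈ S, (counter v : ℝ)) + (1 - α) * (mIn G S : ℝ)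

/-- `degc(v) = deg(v) + counter(v)`. -/
def degc (G : SimpleGraph V) [DecidableRel G.Adj] (counter : V → ℕ) (v : V) : ℕ :=
  G.degree v + counter v

/-- `contribution(v, T) = α·degc(v) + (1−3α)·|N(v) ∩ T|`. -/
noncomputable def contribution (G : SimpleGraph V) [DecidableRel G.Adj] (counter : V → ℕ)
    (α : ℝ) (v : V) (T : Finset V) : ℝ :=
  α * (degc G counter v : ℝ) + (1 - 3 * α) * ((G.neighborFinset v ∩ T).card : ℝ)

/-- `I` is an independent set of `G`: pairwise non-adjacent vertices. -/
def IndepOn (G : SimpleGraph V) (I : Finset V) : Prop :=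
  ∀ u ∈ I, ∀ w ∈ I, u ≠ w → ¬ G.Adj u w

/-- `G` is `c`-closed: every pair of distinct non-adjacent vertices has at most
`c − 1` common neighbors. -/
def CClosed (G : SimpleGraph V) [DecidableRel G.Adj] (c : ℕ) : Prop :=
  ∀ u v : V, u ≠ v → ¬ G.Adj u v → (G.neighborFinset u ∩ G.neighborFinset v).card ≤ c - 1

/-!
Adding a vertex `u` to a set `T` changes `val` by `contribution(u, T)`, so exchanging `v` for `x` is
a comparison of their contributions to `S ∖ {v}`. As `α ≥ 1/3`, the coefficient `1 − 3α` is
nonpositive, and it suffices that `x` has no more neighbors than `v` in `S ∖ {v}`.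
If every `x ∈ X` had a neighbor `w ∈ S ∖ {v}` that is not adjacent to `v`, then `X` would be covered
by the common neighborhoods of `v` with such `w`, each of which has at most `c − 1` elements.
-/

section Counting

variable {W : Type*} (G : SimpleGraph W)

theorem incidenceFinset_eq_map_neighborFinset [DecidableEq W] (u : W) [Fintype (G.neighborSet u)] :
    G.incidenceFinset u = (G.neighborFinset u).map (Sym2.mkEmbedding u) := by
  ext e
  simp only [SimpleGraph.mem_incidenceFinset, SimpleGraph.incidenceSet, Set.mem_ofPred_eq,
    mem_map, SimpleGraph.mem_neighborFinset, Sym2.mkEmbedding_apply]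
  constructor
  · rintro ⟨he, hu⟩
    obtain ⟨w, rfl⟩ := Sym2.mem_iff_exists.1 hu
    exact ⟨w, he, rfl⟩
  · rintro ⟨w, hw, rfl⟩
    exact ⟨hw, Sym2.mem_mk_left u w⟩

theorem card_filter_edgeFinset_eq_add [DecidableEq W] [Fintype G.edgeSet] (u : W)
    [Fintype (G.neighborSet u)] (p : Sym2 W → Prop) [DecidablePred p] :
    #{e ∈ G.edgeFinset | p e} =
      #{w ∈ G.neighborFinset u | p s(u, w)} + #{e ∈ G.edgeFinset | u ∉ e ∧ p e} := by
  have edges_at_u : #{e ∈ G.edgeFinset | u ∈ e ∧ p e} =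
      #{w ∈ G.neighborFinset u | p s(u, w)} := by
    rw [← filter_filter, ← G.incidenceFinset_eq_filter, incidenceFinset_eq_map_neighborFinset,
      filter_map, card_map]
    rfl
  rw [← edges_at_u, ← filter_filter, ← filter_filter, filter_comm, filter_comm (u ∉ ·),
    card_filter_add_card_filter_not]

theorem card_filter_edgeFinset_add_of_iff [Fintype G.edgeSet] (u : W) [Fintype (G.neighborSet u)]
    {p q : Sym2 W → Prop} [DecidablePred p] [DecidablePred q] (hpq : ∀ e, u ∉ e → (p e ↔ q e)) :
    #{e ∈ G.edgeFinset | p e} + #{w ∈ G.neighborFinset u | q s(u, w)} =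
      #{e ∈ G.edgeFinset | q e} + #{w ∈ G.neighborFinset u | p s(u, w)} := by
  classical
  have edges_avoiding_u : {e ∈ G.edgeFinset | u ∉ e ∧ p e} = {e ∈ G.edgeFinset | u ∉ e ∧ q e} :=
    filter_congr fun e _ => and_congr_right (hpq e)
  rw [card_filter_edgeFinset_eq_add G u p, card_filter_edgeFinset_eq_add G u q, edges_avoiding_u]
  ring

theorem exists_neighborFinset_inter_subset [DecidableEq W] [G.LocallyFinite] {v : W}
    {T X : Finset W} {d : ℕ}
    (hd : ∀ w ∈ T \ G.neighborFinset v, #(G.neighborFinset w ∩ G.neighborFinset v) ≤ d)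
    (hX : X ⊆ G.neighborFinset v) (hcard : #(T \ G.neighborFinset v) * d < #X) :
    ∃ x ∈ X, G.neighborFinset x ∩ T ⊆ G.neighborFinset v := by
  by_contra! h
  have hcover : X ⊆ (T \ G.neighborFinset v).biUnion
      fun w => G.neighborFinset w ∩ G.neighborFinset v := by
    intro x hx
    obtain ⟨w, hw, hwv⟩ := not_subset.1 (h x hx)
    obtain ⟨hxw, hwT⟩ := mem_inter.1 hw
    have hwx : x ∈ G.neighborFinset w := by
      rwa [SimpleGraph.mem_neighborFinset, SimpleGraph.adj_comm, ← SimpleGraph.mem_neighborFinset]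
    exact mem_biUnion.2 ⟨w, mem_sdiff.2 ⟨hwT, hwv⟩, mem_inter.2 ⟨hwx, hX hx⟩⟩
  exact hcard.not_ge ((card_le_card hcover).trans (card_biUnion_le_card_mul _ _ d hd))

end Counting

section Exchange

variable (G : SimpleGraph V) [DecidableRel G.Adj]

theorem mIn_insert {u : V} {T : Finset V} (hu : u ∉ T) :
    mIn G (insert u T) = mIn G T + #(G.neighborFinset u ∩ T) := by
  have hiff : ∀ e : Sym2 V, u ∉ e → ((∀ v ∈ e, v ∈ insert u T) ↔ ∀ v ∈ e, v ∈ T) :=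
    fun e he => forall₂_congr fun v hv =>
      mem_insert.trans (or_iff_right (ne_of_mem_of_not_mem hv he))
  have hT : {w ∈ G.neighborFinset u | ∀ v ∈ s(u, w), v ∈ T} = ∅ := by
    simp [hu]
  have hinsert : {w ∈ G.neighborFinset u | ∀ v ∈ s(u, w), v ∈ insert u T} =
      G.neighborFinset u ∩ T := by
    rw [← filter_mem_eq_inter]
    refine filter_congr fun w hw => ?_
    have hwu : w ≠ u := ((G.mem_neighborFinset u w).1 hw).ne'
    simp [hwu]
  have hcount := card_filter_edgeFinset_add_of_iff G u hiff
  rwa [hT, hinsert, card_empty, add_zero] at hcount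

theorem mCut_insert_add {u : V} {T : Finset V} (hu : u ∉ T) :
    mCut G (insert u T) + 2 * #(G.neighborFinset u ∩ T) = mCut G T + G.degree u := by
  have hiff : ∀ e : Sym2 V, u ∉ e →
      (((∃ v ∈ e, v ∈ insert u T) ∧ ∃ v ∈ e, v ∉ insert u T) ↔
        (∃ v ∈ e, v ∈ T) ∧ ∃ v ∈ e, v ∉ T) := by
    grind
  have hT : {w ∈ G.neighborFinset u | (∃ v ∈ s(u, w), v ∈ T) ∧ ∃ v ∈ s(u, w), v ∉ T} =
      G.neighborFinset u ∩ T := by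
    ext w
    simp [hu]
  have hinsert : {w ∈ G.neighborFinset u |
      (∃ v ∈ s(u, w), v ∈ insert u T) ∧ ∃ v ∈ s(u, w), v ∉ insert u T} =
      G.neighborFinset u \ T := by
    rw [sdiff_eq_filter]
    refine filter_congr fun w hw => ?_
    have hwu : w ≠ u := ((G.mem_neighborFinset u w).1 hw).ne'
    simp [hwu]
  have hcount := card_filter_edgeFinset_add_of_iff G u hiff
  rw [hT, hinsert] at hcount
  have hdeg : #(G.neighborFinset u ∩ T) + #(G.neighborFinset u \ T) = G.degree u :=
    card_inter_add_card_sdiff _ _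
  unfold mCut
  lia

variable {G}

theorem val_insert (counter : V → ℕ) (α : ℝ) {u : V} {T : Finset V} (hu : u ∉ T) :
    val G counter α (insert u T) = val G counter α T + contribution G counter α u T := by
  have hIn : (mIn G (insert u T) : ℝ) = mIn G T + #(G.neighborFinset u ∩ T) :=
    mod_cast mIn_insert G hu
  have hCut : (mCut G (insert u T) : ℝ) = mCut G T + G.degree u - 2 * #(G.neighborFinset u ∩ T) :=
    eq_sub_of_add_eq (mod_cast mCut_insert_add G hu)
  rw [_root_.val, hIn, hCut, sum_insert hu, _root_.val, contribution, degc]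
  push_cast
  ring

theorem contribution_le_contribution {counter : V → ℕ} {α : ℝ} (hα : 1 / 3 ≤ α) {v x : V}
    {T : Finset V} (hdegc : degc G counter v ≤ degc G counter x)
    (hcard : #(G.neighborFinset x ∩ T) ≤ #(G.neighborFinset v ∩ T)) :
    contribution G counter α v T ≤ contribution G counter α x T := by
  have hα0 : 0 ≤ α := by linarith
  have hα3 : 1 - 3 * α ≤ 0 := by linarith
  exact add_le_add (mul_le_mul_of_nonneg_left (mod_cast hdegc) hα0)
    (mul_le_mul_of_nonpos_left (mod_cast hcard) hα3)

theorem cclosed_exchange_general {counter : V → ℕ} {α : ℝ} (hα : 1 / 3 ≤ α) {d : ℕ}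
    (hG : CClosed G (d + 1)) {S : Finset V} {v : V} (hvS : v ∈ S) {X : Finset V}
    (hXsub : X ⊆ G.neighborFinset v \ S)
    (hXdegc : ∀ x ∈ X, degc G counter v ≤ degc G counter x)
    (hXcard : #(S.erase v \ G.neighborFinset v) * d < #X) :
    ∃ x ∈ X, val G counter α S ≤ val G counter α (insert x (S.erase v)) := by
  have hcommon : ∀ w ∈ S.erase v \ G.neighborFinset v,
      #(G.neighborFinset w ∩ G.neighborFinset v) ≤ d := by
    intro w hw
    obtain ⟨hwS, hwv⟩ := mem_sdiff.1 hw
    rw [SimpleGraph.mem_neighborFinset, SimpleGraph.adj_comm] at hwv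
    exact hG w v (ne_of_mem_erase hwS) hwv
  obtain ⟨x, hx, hsub⟩ :=
    exists_neighborFinset_inter_subset G hcommon (hXsub.trans sdiff_subset) hXcard
  have hxS : x ∉ S.erase v := fun h => (mem_sdiff.1 (hXsub hx)).2 (mem_of_mem_erase h)
  refine ⟨x, hx, ?_⟩
  calc val G counter α S
      = val G counter α (S.erase v) + contribution G counter α v (S.erase v) := by
        rw [← val_insert counter α (notMem_erase v S), insert_erase hvS]
    _ ≤ val G counter α (S.erase v) + contribution G counter α x (S.erase v) := by
        gcongr
        exact contribution_le_contribution hα (hXdegc x hx)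
          (card_le_card (subset_inter hsub inter_subset_right))
    _ = val G counter α (insert x (S.erase v)) := (val_insert counter α hxS).symm

end Exchange

/-- In a `c`-closed graph (for `1/3 < α ≤ 1`): if more than `(c−1)k` neighbors of
`v ∈ S` outside `S` have `degc` at least `degc(v)`, then `v` can be exchanged with
one of them without decreasing `val`. -/
theorem cclosed_exchange (G : SimpleGraph V) [DecidableRel G.Adj]
    (counter : V → ℕ) (α : ℝ) (hα1 : 1 / 3 < α) (hα2 : α ≤ 1)
    (c k : ℕ) (hc : 1 ≤ c) (hG : CClosed G c)
    (S : Finset V) (hScard : S.card = k) (v : V) (hvS : v ∈ S)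
    (X : Finset V) (hXsub : X ⊆ G.neighborFinset v \ S)
    (hXdegc : ∀ x ∈ X, degc G counter v ≤ degc G counter x)
    (hXcard : (c - 1) * k < X.card) :
    ∃ v' ∈ X, val G counter α (insert v' (S.erase v)) ≥ val G counter α S := by
  obtain ⟨d, rfl⟩ := Nat.exists_eq_add_of_le' hc
  have hcard : #(S.erase v \ G.neighborFinset v) ≤ k :=
    hScard ▸ card_le_card (sdiff_subset.trans (erase_subset v S))
  exact cclosed_exchange_general hα1.le hG hvS hXsub hXdegc
    ((Nat.mul_le_mul_right d hcard).trans_lt (mul_comm d k ▸ hXcard))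
end

section
/- Suppose counter(v) = 0 for every vertex v (so val(S) = α·m(S, V∖S) + (1−α)·m(S)). Let C and D be disjoint subsets of V such that every vertex of D has degree exactly z in G, let D* ⊆ D with |D*| = ℓ, and let S = C ∪ D*. Then val(S) = val(C) + α·z·ℓ + (1−3α)·(e(D*, C) + m(D*)), where e(D*, C) is the number of edges with one endpoint in D* and the other in C and m(D*) is the number of edges with both endpoints in D*. -/
open Finset

variable {V : Type*} [Fintype V] [DecidableEq V]

/-- Number of edges of `G` between disjoint sets `A` and `B`. -/
def eBetween (G : SimpleGraph V) [DecidableRel G.Adj] (A B : Finset V) : ℕ :=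
  ((A ×ˢ B).filter (fun p => G.Adj p.1 p.2)).card

/-!
Counting ordered pairs, `e(S, S) = 2·m(S)` and `e(S, V∖S) = m(S, V∖S)`, so the degrees over `S`
sum to `2·m(S) + m(S, V∖S)`. Eliminating the cut gives
`val(S) = α·∑_{v ∈ S} degc(v) + (1−3α)·m(S)`, in which the first term is additive over disjoint
unions and the second one fails to be so by exactly the edges between the two parts.
-/

section EBetween

variable {W : Type*} (G : SimpleGraph W) [DecidableRel G.Adj]

theorem eBetween_comm (A B : Finset W) : eBetween G A B = eBetween G B A :=
  haveI : Std.Symm G.Adj := ⟨fun _ _ h => h.symm⟩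
  Rel.card_interedges_comm A B

theorem eBetween_univ_right [Fintype W] (S : Finset W) :
    eBetween G S univ = ∑ v ∈ S, G.degree v := by
  simp only [eBetween, card_filter, sum_product, ← G.card_neighborFinset_eq_degree,
    G.neighborFinset_eq_filter]

variable [DecidableEq W]

theorem eBetween_union_left {A B : Finset W} (hAB : Disjoint A B) (T : Finset W) :
    eBetween G (A ∪ B) T = eBetween G A T + eBetween G B T := by
  have hdisj := G.interedges_disjoint_left hAB T
  simp only [SimpleGraph.interedges_def] at hdisj
  rw [eBetween, union_product, filter_union, card_union_of_disjoint hdisj, eBetween, eBetween]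

theorem eBetween_union_right (S : Finset W) {A B : Finset W} (hAB : Disjoint A B) :
    eBetween G S (A ∪ B) = eBetween G S A + eBetween G S B := by
  rw [eBetween_comm, eBetween_union_left G hAB, eBetween_comm G A, eBetween_comm G B]

end EBetween

section EdgeCounts

variable (G : SimpleGraph V) [DecidableRel G.Adj]

theorem eBetween_self (S : Finset V) : eBetween G S S = 2 * mIn G S := by
  classical
  let K : SimpleGraph V := (G.induce (S : Set V)).spanningCoe
  have hadj (a b : V) : K.Adj a b ↔ G.Adj a b ∧ a ∈ S ∧ b ∈ S := by
    simp [K]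
  have hedges : K.edgeFinset = G.edgeFinset.filter (fun e => ∀ v ∈ e, v ∈ S) := by
    ext ⟨a, b⟩
    simp [hadj]
  have hpairs : (S ×ˢ S).filter (fun p => G.Adj p.1 p.2) =
      univ.filter (fun (a, b) => K.Adj a b) := by
    ext ⟨a, b⟩
    simp [hadj, and_comm]
  rw [eBetween, hpairs, mIn, ← hedges, K.two_mul_card_edgeFinset]

theorem eBetween_compl_right (S : Finset V) : eBetween G S Sᶜ = mCut G S := by
  refine card_bij (fun p _ => s(p.1, p.2)) ?maps_to ?injective ?surjective
  case maps_to =>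
    rintro ⟨a, b⟩ hab
    simp only [mem_filter, mem_product, mem_compl] at hab
    obtain ⟨⟨ha, hb⟩, hadj⟩ := hab
    exact mem_filter.mpr ⟨G.mem_edgeFinset.mpr hadj,
      ⟨a, Sym2.mem_mk_left a b, ha⟩, ⟨b, Sym2.mem_mk_right a b, hb⟩⟩
  case injective =>
    simp only [mem_filter, mem_product, mem_compl, Sym2.eq_iff]
    grind
  case surjective =>
    rintro ⟨a, b⟩ hab
    simp only [mem_filter, SimpleGraph.mem_edgeFinset, SimpleGraph.mem_edgeSet, Sym2.mem_iff,
      exists_eq_or_imp, exists_eq_left] at hab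
    obtain ⟨hadj, hin, hout⟩ := hab
    by_cases ha : a ∈ S
    · have hb : b ∉ S := hout.resolve_left (not_not.mpr ha)
      exact ⟨(a, b), by simp [ha, hb, hadj], rfl⟩
    · have hb : b ∈ S := hin.resolve_left ha
      exact ⟨(b, a), by simp [ha, hb, hadj.symm], Sym2.eq_swap⟩

theorem sum_degree_eq_two_mul_mIn_add_mCut (S : Finset V) :
    ∑ v ∈ S, G.degree v = 2 * mIn G S + mCut G S := by
  rw [← eBetween_univ_right, ← union_compl S, eBetween_union_right G S disjoint_compl_right,
    eBetween_self, eBetween_compl_right]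

theorem mIn_union {A B : Finset V} (hAB : Disjoint A B) :
    mIn G (A ∪ B) = mIn G A + mIn G B + eBetween G B A := by
  have hpairs : 2 * mIn G (A ∪ B) = 2 * (mIn G A + mIn G B + eBetween G B A) := by
    calc 2 * mIn G (A ∪ B)
      _ = eBetween G (A ∪ B) (A ∪ B) := (eBetween_self G _).symm
      _ = eBetween G A A + eBetween G A B + (eBetween G B A + eBetween G B B) := by
        rw [eBetween_union_left G hAB, eBetween_union_right G A hAB,
          eBetween_union_right G B hAB]
      _ = 2 * (mIn G A + mIn G B + eBetween G B A) := by
        rw [eBetween_self, eBetween_self, eBetween_comm G A B]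
        ring
  exact Nat.eq_of_mul_eq_mul_left two_pos hpairs

end EdgeCounts

section Val

variable (G : SimpleGraph V) [DecidableRel G.Adj] (counter : V → ℕ) (α : ℝ)

theorem val_eq_sum_degc_add_mIn (S : Finset V) :
    val G counter α S =
      α * ∑ v ∈ S, (degc G counter v : ℝ) + (1 - 3 * α) * (mIn G S : ℝ) := by
  have hdeg : ∑ v ∈ S, (G.degree v : ℝ) = 2 * mIn G S + mCut G S :=
    mod_cast sum_degree_eq_two_mul_mIn_add_mCut G S
  simp only [_root_.val, degc, Nat.cast_add, sum_add_distrib, hdeg]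
  ring

theorem val_union_regular_part_general {A B : Finset V} (hAB : Disjoint A B) :
    val G counter α (A ∪ B) =
      val G counter α A + α * ∑ v ∈ B, (degc G counter v : ℝ) +
        (1 - 3 * α) * ((eBetween G B A : ℝ) + (mIn G B : ℝ)) := by
  rw [val_eq_sum_degc_add_mIn, val_eq_sum_degc_add_mIn, sum_union hAB, mIn_union G hAB]
  push_cast
  ring

end Val

/-- With all counters zero, if every vertex of `D` has degree `z` and `D* ⊆ D` has
`ℓ` elements, then for `S = C ∪ D*` (with `C, D` disjoint):
`val(S) = val(C) + α·z·ℓ + (1−3α)·(e(D*,C) + m(D*))`. -/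
theorem val_union_regular_part (G : SimpleGraph V) [DecidableRel G.Adj] (α : ℝ)
    (C D : Finset V) (hCD : Disjoint C D) (z : ℕ) (hdeg : ∀ w ∈ D, G.degree w = z)
    (Dstar : Finset V) (hDs : Dstar ⊆ D) (ℓ : ℕ) (hℓ : Dstar.card = ℓ) :
    val G (fun _ => 0) α (C ∪ Dstar) =
      val G (fun _ => 0) α C + α * (z : ℝ) * (ℓ : ℝ) +
        (1 - 3 * α) * ((eBetween G Dstar C : ℝ) + (mIn G Dstar : ℝ)) := by
  have hdegc (w : V) (hw : w ∈ Dstar) : (degc G (fun _ => 0) w : ℝ) = z :=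
    congrArg Nat.cast (hdeg w (hDs hw))
  rw [val_union_regular_part_general G _ α (hCD.mono_right hDs), sum_congr rfl hdegc, sum_const,
    hℓ, nsmul_eq_mul, mul_comm (ℓ : ℝ), mul_assoc α]
end
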